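/- Fix $i$ with $1 \le i \le n$ and set $\sigma_i = x_0\cdots x_{i-1}$, $\tau_i = y_i\cdots y_n$. Multiplication by $x_ix_{i+1}\cdots x_n$ defines an injective $A_0$-module homomorphism $A_{\chi_i} \to A_0$ whose image is the ideal $A_0\,u + A_0\,(t_it_{i+1}\cdots t_n)$ of $A_0$ (it sends $\sigma_i \mapsto u$ and $\tau_i \mapsto t_i\cdots t_n$). Likewise, multiplication by $y_0y_1\cdots y_{i-1}$ defines an injective $A_0$-module homomorphism $A_{\chi_i} \to A_0$ whose image is the ideal $A_0\,v + A_0\,(t_0t_1\cdots t_{i-1})$. In particular, $A_{\chi_i}$ is isomorphic as an $A_0$-module to an ideal of $A_0$ generated by two elements, one of which is $u$ (resp. $v$) and the other a product of the $t_l$. -/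

import Mathlib

open MvPolynomial

noncomputable section

/-- The variables of `A = k[x₀,…,xₙ,y₀,…,yₙ]`: `Sum.inl i` is `xᵢ`, `Sum.inr i` is `yᵢ`. -/
abbrev Vars (n : ℕ) : Type := Fin (n + 1) ⊕ Fin (n + 1)

/-- The `l`-th weight of a monomial `∏ xᵢ^{cᵢ} yᵢ^{dᵢ}`, for `l ∈ {1,…,n}` encoded as
`l : Fin n` (representing the index `l+1`): it is `c_{l-1} - c_l - d_{l-1} + d_l`. -/
def wt (n : ℕ) (σ : Vars n →₀ ℕ) (l : Fin n) : ℤ :=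
  (σ (Sum.inl l.castSucc) : ℤ) - (σ (Sum.inl l.succ) : ℤ)
    - (σ (Sum.inr l.castSucc) : ℤ) + (σ (Sum.inr l.succ) : ℤ)

/-- The weight space `A_χ`. -/
def wtSpace (k : Type) [Field k] (n : ℕ) (χ : Fin n → ℤ) : Set (MvPolynomial (Vars n) k) :=
  {p | ∀ σ ∈ p.support, ∀ l : Fin n, wt n σ l = χ l}

/-- The standard basis vector `χ_{i+1} ∈ ℤⁿ`, for `i : Fin n` representing the paper's
index `i+1 ∈ {1,…,n}`. -/
def chi (n : ℕ) (i : Fin n) : Fin n → ℤ := fun l => if l = i then 1 else 0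

/-- `σ_{i+1} = x₀x₁⋯xᵢ`. -/
def sigmaElt (k : Type) [Field k] (n : ℕ) (i : Fin n) : MvPolynomial (Vars n) k :=
  ∏ j ∈ Finset.univ.filter (fun j : Fin (n + 1) => (j : ℕ) < (i : ℕ) + 1), X (Sum.inl j)

/-- `τ_{i+1} = y_{i+1}⋯yₙ`. -/
def tauElt (k : Type) [Field k] (n : ℕ) (i : Fin n) : MvPolynomial (Vars n) k :=
  ∏ j ∈ Finset.univ.filter (fun j : Fin (n + 1) => (i : ℕ) + 1 ≤ (j : ℕ)), X (Sum.inr j)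

/-- `u = x₀⋯xₙ`. -/
def uElt (k : Type) [Field k] (n : ℕ) : MvPolynomial (Vars n) k := ∏ i, X (Sum.inl i)

/-- `v = y₀⋯yₙ`. -/
def vElt (k : Type) [Field k] (n : ℕ) : MvPolynomial (Vars n) k := ∏ i, X (Sum.inr i)

theorem wt_add (n : ℕ) (a b : Vars n →₀ ℕ) (l : Fin n) : wt n (a + b) l = wt n a l + wt n b l := by
  simp only [wt, Finsupp.add_apply]; push_cast; ring

theorem wtSpace_add {k : Type} [Field k] {n : ℕ} {χ : Fin n → ℤ} {p q : MvPolynomial (Vars n) k}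
    (hp : p ∈ wtSpace k n χ) (hq : q ∈ wtSpace k n χ) : p + q ∈ wtSpace k n χ := by
  classical
  intro s hs l
  rcases Finset.mem_union.1 (MvPolynomial.support_add hs) with h | h
  · exact hp s h l
  · exact hq s h l

theorem wtSpace_mul {k : Type} [Field k] {n : ℕ} {χ ψ φ : Fin n → ℤ}
    {p q : MvPolynomial (Vars n) k} (hφ : ∀ l, χ l + ψ l = φ l)
    (hp : p ∈ wtSpace k n χ) (hq : q ∈ wtSpace k n ψ) : p * q ∈ wtSpace k n φ := by
  classical
  intro s hs l
  obtain ⟨a, ha, b, hb, rfl⟩ := Finset.mem_add.1 (MvPolynomial.support_mul p q hs)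
  rw [wt_add, hp a ha, hq b hb, hφ]

theorem wtSpace_monomial {k : Type} [Field k] {n : ℕ} {χ : Fin n → ℤ} {m : Vars n →₀ ℕ} (c : k)
    (h : ∀ l, wt n m l = χ l) : monomial m c ∈ wtSpace k n χ := by
  intro s hs l
  rw [Finset.mem_singleton.1 (MvPolynomial.support_monomial_subset hs)]
  exact h l

theorem wtSpace_zero_mem {k : Type} [Field k] {n : ℕ} {χ : Fin n → ℤ} :
    (0 : MvPolynomial (Vars n) k) ∈ wtSpace k n χ := by
  intro s hs; simp at hs

/-- The exponent of a product of distinct variables. -/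
def ex (n : ℕ) (S : Finset (Fin (n + 1))) (f : Fin (n + 1) → Vars n) : Vars n →₀ ℕ :=
  ∑ j ∈ S, Finsupp.single (f j) 1

theorem prod_eq (k : Type) [Field k] (n : ℕ) (S : Finset (Fin (n + 1)))
    (f : Fin (n + 1) → Vars n) :
    (∏ j ∈ S, (X (f j) : MvPolynomial (Vars n) k)) = monomial (ex n S f) 1 := by
  rw [ex, MvPolynomial.monomial_sum_one]; rfl

theorem ex_ll (n : ℕ) (S : Finset (Fin (n + 1))) (l) :
    ex n S Sum.inl (Sum.inl l) = if l ∈ S then 1 else 0 := by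
  classical
  simp [ex, Finsupp.finsetSum_apply, Finsupp.single_apply]
theorem ex_lr (n : ℕ) (S : Finset (Fin (n + 1))) (l) :
    ex n S Sum.inl (Sum.inr l) = 0 := by
  classical
  simp [ex, Finsupp.finsetSum_apply, Finsupp.single_apply]
theorem ex_rl (n : ℕ) (S : Finset (Fin (n + 1))) (l) :
    ex n S Sum.inr (Sum.inl l) = 0 := by
  classical
  simp [ex, Finsupp.finsetSum_apply, Finsupp.single_apply]
theorem ex_rr (n : ℕ) (S : Finset (Fin (n + 1))) (l) :
    ex n S Sum.inr (Sum.inr l) = if l ∈ S then 1 else 0 := by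
  classical
  simp [ex, Finsupp.finsetSum_apply, Finsupp.single_apply]

abbrev lo (n : ℕ) (i : Fin n) : Finset (Fin (n + 1)) :=
  Finset.univ.filter (fun j : Fin (n + 1) => (j : ℕ) < (i : ℕ) + 1)
abbrev hi (n : ℕ) (i : Fin n) : Finset (Fin (n + 1)) :=
  Finset.univ.filter (fun j : Fin (n + 1) => (i : ℕ) + 1 ≤ (j : ℕ))

theorem wt_lo_l (n : ℕ) (i l : Fin n) : wt n (ex n (lo n i) Sum.inl) l = chi n i l := by
  simp only [wt, ex_ll, ex_lr, chi, Finset.mem_filter, Finset.mem_univ, true_and,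
    Fin.val_castSucc, Fin.val_succ, Fin.ext_iff]
  split_ifs <;> first | omega | simp
theorem wt_hi_r (n : ℕ) (i l : Fin n) : wt n (ex n (hi n i) Sum.inr) l = chi n i l := by
  simp only [wt, ex_rl, ex_rr, chi, Finset.mem_filter, Finset.mem_univ, true_and,
    Fin.val_castSucc, Fin.val_succ, Fin.ext_iff]
  split_ifs <;> first | omega | simp
theorem wt_hi_l (n : ℕ) (i l : Fin n) : wt n (ex n (hi n i) Sum.inl) l = - chi n i l := by
  simp only [wt, ex_ll, ex_lr, chi, Finset.mem_filter, Finset.mem_univ, true_and,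
    Fin.val_castSucc, Fin.val_succ, Fin.ext_iff]
  split_ifs <;> first | omega | simp
theorem wt_lo_r (n : ℕ) (i l : Fin n) : wt n (ex n (lo n i) Sum.inr) l = - chi n i l := by
  simp only [wt, ex_rl, ex_rr, chi, Finset.mem_filter, Finset.mem_univ, true_and,
    Fin.val_castSucc, Fin.val_succ, Fin.ext_iff]
  split_ifs <;> first | omega | simp

theorem sigma_eq (k : Type) [Field k] (n : ℕ) (i : Fin n) :
    sigmaElt k n i = monomial (ex n (lo n i) Sum.inl) 1 := prod_eq k n _ _
theorem tau_eq (k : Type) [Field k] (n : ℕ) (i : Fin n) :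
    tauElt k n i = monomial (ex n (hi n i) Sum.inr) 1 := prod_eq k n _ _

theorem diff_eq (n : ℕ) (i : Fin n) (m : Vars n →₀ ℕ) (h : ∀ l, wt n m l = chi n i l)
    (j : ℕ) (hj : j < n + 1) :
    (m (Sum.inl ⟨j, hj⟩) : ℤ) - m (Sum.inr ⟨j, hj⟩) =
      (m (Sum.inl 0) : ℤ) - m (Sum.inr 0) - if j < i.1 + 1 then 0 else 1 := by
  induction j with
  | zero => simp
  | succ j ih =>
    have h1 := ih (by omega)
    have h2 := h ⟨j, by omega⟩
    simp only [wt, chi, Fin.castSucc_mk, Fin.succ_mk, Fin.ext_iff] at h2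
    split_ifs at * <;> omega

theorem le_or (n : ℕ) (i : Fin n) (m : Vars n →₀ ℕ) (h : ∀ l, wt n m l = chi n i l) :
    ex n (lo n i) Sum.inl ≤ m ∨ ex n (hi n i) Sum.inr ≤ m := by
  have hd := diff_eq n i m h
  rcases le_or_gt ((m (Sum.inl 0) : ℤ) - m (Sum.inr 0)) 0 with h0 | h0
  · right
    rintro (⟨j, hj⟩ | ⟨j, hj⟩)
    · simp [ex_rl]
    · have := hd j hj
      simp only [ex_rr, Finset.mem_filter, Finset.mem_univ, true_and]
      split_ifs at * <;> omega
  · left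
    rintro (⟨j, hj⟩ | ⟨j, hj⟩)
    · have := hd j hj
      simp only [ex_ll, Finset.mem_filter, Finset.mem_univ, true_and]
      split_ifs at * <;> omega
    · simp [ex_lr]

theorem decomp {k : Type} [Field k] {n : ℕ} (i : Fin n) {q : MvPolynomial (Vars n) k}
    (hq : q ∈ wtSpace k n (chi n i)) :
    ∃ p₁ ∈ wtSpace k n 0, ∃ p₂ ∈ wtSpace k n 0,
      q = p₁ * sigmaElt k n i + p₂ * tauElt k n i := by
  rw [q.as_sum]
  refine Finset.sum_induction _ (fun q => ∃ p₁ ∈ wtSpace k n 0, ∃ p₂ ∈ wtSpace k n 0,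
      q = p₁ * sigmaElt k n i + p₂ * tauElt k n i) ?_ ?_ ?_
  · rintro _ _ ⟨a, ha, b, hb, rfl⟩ ⟨c, hc, d, hd, rfl⟩
    exact ⟨a + c, wtSpace_add ha hc, b + d, wtSpace_add hb hd, by ring⟩
  · exact ⟨0, wtSpace_zero_mem, 0, wtSpace_zero_mem, by simp⟩
  · intro m hm
    have h := hq m hm
    rcases le_or n i m h with hle | hle
    · obtain ⟨r, hr⟩ := exists_add_of_le hle
      refine ⟨monomial r (coeff m q), wtSpace_monomial _ ?_, 0, wtSpace_zero_mem, ?_⟩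
      · intro l
        have := h l
        rw [hr, wt_add, wt_lo_l] at this
        simpa using this
      · rw [sigma_eq, monomial_mul, add_comm r, ← hr]; simp
    · obtain ⟨r, hr⟩ := exists_add_of_le hle
      refine ⟨0, wtSpace_zero_mem, monomial r (coeff m q), wtSpace_monomial _ ?_, ?_⟩
      · intro l
        have := h l
        rw [hr, wt_add, wt_hi_r] at this
        simpa using this
      · rw [tau_eq, monomial_mul, add_comm r, ← hr]; simp

theorem image_eq {k : Type} [Field k] {n : ℕ} (i : Fin n) {P a b : MvPolynomial (Vars n) k}
    (ha : P * sigmaElt k n i = a) (hb : P * tauElt k n i = b) :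
    {r : MvPolynomial (Vars n) k | ∃ q ∈ wtSpace k n (chi n i), r = P * q} =
      {r | ∃ p₁ ∈ wtSpace k n 0, ∃ p₂ ∈ wtSpace k n 0, r = p₁ * a + p₂ * b} := by
  subst ha hb
  ext r
  constructor
  · rintro ⟨q, hq, rfl⟩
    obtain ⟨p₁, h₁, p₂, h₂, rfl⟩ := decomp i hq
    exact ⟨p₁, h₁, p₂, h₂, by ring⟩
  · rintro ⟨p₁, h₁, p₂, h₂, rfl⟩
    refine ⟨p₁ * sigmaElt k n i + p₂ * tauElt k n i, wtSpace_add ?_ ?_, by ring⟩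
    · exact wtSpace_mul (by simp) h₁ (sigma_eq k n i ▸ wtSpace_monomial 1 (wt_lo_l n i))
    · exact wtSpace_mul (by simp) h₂ (tau_eq k n i ▸ wtSpace_monomial 1 (wt_hi_r n i))

theorem prod_split (k : Type) [Field k] (n : ℕ) (i : Fin n) (f : Fin (n + 1) → Vars n) :
    (∏ j ∈ lo n i, (X (f j) : MvPolynomial (Vars n) k)) * ∏ j ∈ hi n i, X (f j) =
      ∏ j, X (f j) := by
  have : hi n i = Finset.univ.filter (fun j : Fin (n + 1) => ¬ (j : ℕ) < (i : ℕ) + 1) := by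
    simp [hi]
  rw [this]
  exact Finset.prod_filter_mul_prod_filter_not _ _ _

/-- For a fixed `i ∈ {1,…,n}` (encoded as `i : Fin n` representing the paper's `i+1`):
multiplication by `xᵢ⋯xₙ` maps `A_{χᵢ}` into `A₀`, injectively and `A₀`-linearly
(automatic, as it is multiplication in a commutative domain), sending
`σᵢ ↦ u` and `τᵢ ↦ tᵢ⋯tₙ`, with image the ideal `A₀·u + A₀·(tᵢ⋯tₙ)`; likewise,
multiplication by `y₀⋯y_{i-1}` maps `A_{χᵢ}` injectively into `A₀`, sending
`τᵢ ↦ v` and `σᵢ ↦ t₀⋯t_{i-1}`, with image the ideal `A₀·v + A₀·(t₀⋯t_{i-1})`. -/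
theorem stmt4 (k : Type) [Field k] (n : ℕ) (hn : 1 ≤ n) (i : Fin n) :
    -- multiplication by `xᵢ⋯xₙ` (paper indices), i.e. `x_{i+1}⋯xₙ` in our encoding
    (∀ q ∈ wtSpace k n (chi n i),
      (∏ j ∈ Finset.univ.filter (fun j : Fin (n + 1) => (i : ℕ) + 1 ≤ (j : ℕ)),
        X (Sum.inl j)) * q ∈ wtSpace k n 0) ∧
    Set.InjOn
      (fun q => (∏ j ∈ Finset.univ.filter (fun j : Fin (n + 1) => (i : ℕ) + 1 ≤ (j : ℕ)),
        X (Sum.inl j)) * q)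
      (wtSpace k n (chi n i)) ∧
    (∏ j ∈ Finset.univ.filter (fun j : Fin (n + 1) => (i : ℕ) + 1 ≤ (j : ℕ)),
        X (Sum.inl j)) * sigmaElt k n i = uElt k n ∧
    (∏ j ∈ Finset.univ.filter (fun j : Fin (n + 1) => (i : ℕ) + 1 ≤ (j : ℕ)),
        X (Sum.inl j)) * tauElt k n i =
      ∏ j ∈ Finset.univ.filter (fun j : Fin (n + 1) => (i : ℕ) + 1 ≤ (j : ℕ)),
        (X (Sum.inl j) * X (Sum.inr j)) ∧
    {r : MvPolynomial (Vars n) k | ∃ q ∈ wtSpace k n (chi n i),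
        r = (∏ j ∈ Finset.univ.filter (fun j : Fin (n + 1) => (i : ℕ) + 1 ≤ (j : ℕ)),
          X (Sum.inl j)) * q} =
      {r | ∃ p₁ ∈ wtSpace k n 0, ∃ p₂ ∈ wtSpace k n 0,
        r = p₁ * uElt k n +
          p₂ * ∏ j ∈ Finset.univ.filter (fun j : Fin (n + 1) => (i : ℕ) + 1 ≤ (j : ℕ)),
            (X (Sum.inl j) * X (Sum.inr j))} ∧
    -- multiplication by `y₀⋯y_{i-1}` (paper indices), i.e. `y₀⋯yᵢ` in our encoding
    (∀ q ∈ wtSpace k n (chi n i),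
      (∏ j ∈ Finset.univ.filter (fun j : Fin (n + 1) => (j : ℕ) < (i : ℕ) + 1),
        X (Sum.inr j)) * q ∈ wtSpace k n 0) ∧
    Set.InjOn
      (fun q => (∏ j ∈ Finset.univ.filter (fun j : Fin (n + 1) => (j : ℕ) < (i : ℕ) + 1),
        X (Sum.inr j)) * q)
      (wtSpace k n (chi n i)) ∧
    (∏ j ∈ Finset.univ.filter (fun j : Fin (n + 1) => (j : ℕ) < (i : ℕ) + 1),
        X (Sum.inr j)) * tauElt k n i = vElt k n ∧
    (∏ j ∈ Finset.univ.filter (fun j : Fin (n + 1) => (j : ℕ) < (i : ℕ) + 1),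
        X (Sum.inr j)) * sigmaElt k n i =
      ∏ j ∈ Finset.univ.filter (fun j : Fin (n + 1) => (j : ℕ) < (i : ℕ) + 1),
        (X (Sum.inl j) * X (Sum.inr j)) ∧
    {r : MvPolynomial (Vars n) k | ∃ q ∈ wtSpace k n (chi n i),
        r = (∏ j ∈ Finset.univ.filter (fun j : Fin (n + 1) => (j : ℕ) < (i : ℕ) + 1),
          X (Sum.inr j)) * q} =
      {r | ∃ p₁ ∈ wtSpace k n 0, ∃ p₂ ∈ wtSpace k n 0,
        r = p₁ * vElt k n +
          p₂ * ∏ j ∈ Finset.univ.filter (fun j : Fin (n + 1) => (j : ℕ) < (i : ℕ) + 1),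
            (X (Sum.inl j) * X (Sum.inr j))} := by
  have e1 : (∏ j ∈ hi n i, (X (Sum.inl j) : MvPolynomial (Vars n) k)) * sigmaElt k n i
      = uElt k n := by
    rw [mul_comm]; exact prod_split k n i Sum.inl
  have e2 : (∏ j ∈ hi n i, (X (Sum.inl j) : MvPolynomial (Vars n) k)) * tauElt k n i
      = ∏ j ∈ hi n i, (X (Sum.inl j) * X (Sum.inr j)) := Finset.prod_mul_distrib.symm
  have e3 : (∏ j ∈ lo n i, (X (Sum.inr j) : MvPolynomial (Vars n) k)) * tauElt k n i
      = vElt k n := prod_split k n i Sum.inr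
  have e4 : (∏ j ∈ lo n i, (X (Sum.inr j) : MvPolynomial (Vars n) k)) * sigmaElt k n i
      = ∏ j ∈ lo n i, (X (Sum.inl j) * X (Sum.inr j)) := by
    rw [mul_comm]; exact Finset.prod_mul_distrib.symm
  refine ⟨?_, ?_, e1, e2, image_eq i e1 e2, ?_, ?_, e3, e4, ?_⟩
  · intro q hq
    rw [prod_eq]
    exact wtSpace_mul (by simp) (wtSpace_monomial 1 (χ := fun l => - chi n i l) (wt_hi_l n i)) hq
  · intro a _ b _ hab
    exact mul_left_cancel₀ (Finset.prod_ne_zero_iff.2 fun j _ => X_ne_zero _) hab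
  · intro q hq
    rw [prod_eq]
    exact wtSpace_mul (by simp) (wtSpace_monomial 1 (χ := fun l => - chi n i l) (wt_lo_r n i)) hq
  · intro a _ b _ hab
    exact mul_left_cancel₀ (Finset.prod_ne_zero_iff.2 fun j _ => X_ne_zero _) hab
  · rw [image_eq i e4 e3]
    ext r
    constructor
    · rintro ⟨a, ha, b, hb, rfl⟩
      exact ⟨b, hb, a, ha, add_comm _ _⟩
    · rintro ⟨a, ha, b, hb, rfl⟩
      exact ⟨b, hb, a, ha, add_comm _ _⟩
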